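/- (Elliptical potential lemma, square-root form.) Let x_1, …, x_K ∈ ℝ^d satisfy ‖x_k‖₂ ≤ 1 for every k, and suppose the linear span of {x_1, …, x_K} has dimension at most r. Let λ > 0, B > 0, and for each k ∈ {1,…,K} set U_k = λ·I_d + Σ_{t=1}^{k−1} x_t x_tᵀ. Then Σ_{k=1}^{K} min{ √(x_kᵀ U_k^{−1} x_k) , √B } ≤ √( (1+B)·r·K·log(1 + K/λ) ). -/

import Mathlib

/-!
Write `q k = x_kᵀ U_k⁻¹ x_k`. The matrix determinant lemma gives `det U_{k+1} = det U_k * (1 + q k)`,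
so `∑ log (1 + q k)` telescopes to `log det (λ I + S) - d log λ` with `S = ∑ x_t x_tᵀ`
(`sum_log_eq`). Diagonalising `S`, this equals `∑ log (1 + σ_i / λ)` over the eigenvalues `σ_i` of
`S`; at most `r` of them are nonzero because `rank S` is the dimension of the span of the `x_t`, and
each is at most `trace S ≤ K`, so the sum is at most `r log (1 + K / λ)` (`log_det_le`).
The scalar inequality `min u B ≤ (1 + B) log (1 + u)` (`min_le_mul_log`) converts this into a bound
on `∑ min (q k) B`, and Cauchy–Schwarz yields the square-root form.
-/

open Matrix

namespace EllipticalPotential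

lemma min_le_mul_log {u B : ℝ} (hu : 0 ≤ u) (hB : 0 < B) :
    min u B ≤ (1 + B) * Real.log (1 + u) := by
  have h1 : (0 : ℝ) < 1 + u := by linarith
  have h := Real.one_sub_inv_le_log_of_pos h1
  refine le_trans ?_ (mul_le_mul_of_nonneg_left h (by linarith))
  have e : (1 + B) * (1 - (1 + u)⁻¹) = (1 + B) * u / (1 + u) := by field_simp; ring
  rw [e, le_div_iff₀ h1]
  rcases le_total u B with hb | hb
  · rw [min_eq_left hb]; nlinarith
  · rw [min_eq_right hb]; nlinarith

/-- The matrix determinant lemma for a symmetric rank-one update. -/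
lemma det_add_vecMulVec_self {d : ℕ} {A : Matrix (Fin d) (Fin d) ℝ} (hA : IsUnit A.det)
    (v : Fin d → ℝ) : (A + vecMulVec v v).det = A.det * (1 + v ⬝ᵥ (A⁻¹ *ᵥ v)) := by
  rw [vecMulVec_eq Unit, det_add_replicateCol_mul_replicateRow hA, Matrix.mul_assoc,
    ← replicateCol_mulVec, replicateRow_mul_replicateCol]
  simp [det_unique]

/-- The Gram matrix `λ I + ∑_{t < n} x_t x_tᵀ`, with `n` a natural number so that the full sum
`n = K` is included. -/
noncomputable def regGram {d K : ℕ} (x : Fin K → Fin d → ℝ) (lam : ℝ) (n : ℕ) :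
    Matrix (Fin d) (Fin d) ℝ :=
  lam • (1 : Matrix (Fin d) (Fin d) ℝ) +
    ∑ t ∈ Finset.univ.filter (fun t : Fin K => (t : ℕ) < n), vecMulVec (x t) (x t)

variable {d K : ℕ} (x : Fin K → Fin d → ℝ) {lam : ℝ}

lemma posSemidef_sum_vecMulVec (s : Finset (Fin K)) :
    (∑ t ∈ s, vecMulVec (x t) (x t)).PosSemidef :=
  posSemidef_sum s fun t _ => by simpa using posSemidef_vecMulVec_self_star (x t)

lemma regGram_posDef (hlam : 0 < lam) (n : ℕ) : (regGram x lam n).PosDef :=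
  (PosDef.one.smul hlam).add_posSemidef (posSemidef_sum_vecMulVec x _)

lemma regGram_succ (k : Fin K) :
    regGram x lam (k + 1) = regGram x lam k + vecMulVec (x k) (x k) := by
  have : Finset.univ.filter (fun t : Fin K => (t : ℕ) < k + 1) =
      insert k (Finset.univ.filter (fun t : Fin K => (t : ℕ) < k)) := by
    ext t
    simp [Fin.ext_iff]
    omega
  rw [regGram, regGram, this, Finset.sum_insert (by simp)]
  abel

lemma quad_nonneg (hlam : 0 < lam) (n : ℕ) (v : Fin d → ℝ) :
    0 ≤ v ⬝ᵥ ((regGram x lam n)⁻¹ *ᵥ v) := by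
  simpa using (regGram_posDef x hlam n).inv.posSemidef.dotProduct_mulVec_nonneg v

lemma sum_log_eq (hlam : 0 < lam) :
    ∑ k : Fin K, Real.log (1 + x k ⬝ᵥ ((regGram x lam k)⁻¹ *ᵥ x k)) =
      Real.log (regGram x lam K).det - d * Real.log lam := by
  have h0 : Real.log (regGram x lam 0).det = d * Real.log lam := by simp [regGram]
  rw [← h0, ← Finset.sum_range_sub (fun n => Real.log (regGram x lam n).det),
    ← Fin.sum_univ_eq_sum_range
      (fun n => Real.log (regGram x lam (n + 1)).det - Real.log (regGram x lam n).det)]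
  refine Finset.sum_congr rfl fun k _ => ?_
  have hd := (regGram_posDef x hlam k).det_pos
  have hq := quad_nonneg x hlam k (x k)
  rw [regGram_succ, det_add_vecMulVec_self hd.ne'.isUnit, Real.log_mul hd.ne' (by positivity)]
  ring

/-- The log-determinant bound depends on the rank of `S`, not on the ambient dimension: zero
eigenvalues contribute `log 1 = 0`, and every eigenvalue is at most the trace. -/
lemma log_det_le {S : Matrix (Fin d) (Fin d) ℝ} (hS : S.PosSemidef) {r : ℕ} {T : ℝ}
    (hr : S.rank ≤ r) (hT : S.trace ≤ T) (hlam : 0 < lam) :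
    Real.log (lam • (1 : Matrix (Fin d) (Fin d) ℝ) + S).det - d * Real.log lam ≤
      r * Real.log (1 + T / lam) := by
  set σ := hS.1.eigenvalues with hσ
  have hσ0 : ∀ i, 0 ≤ σ i := hS.eigenvalues_nonneg
  have htr : S.trace = ∑ i, σ i := by simpa using hS.1.trace_eq_sum_eigenvalues
  have hσT : ∀ i, σ i ≤ T := fun i =>
    (Finset.single_le_sum (fun j _ => hσ0 j) (Finset.mem_univ i)).trans (htr ▸ hT)
  have hT0 : 0 ≤ T := (htr ▸ Finset.sum_nonneg fun i _ => hσ0 i : 0 ≤ S.trace).trans hT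
  -- Up to the sign `(-1)^d`, the determinant is the characteristic polynomial at `-λ`.
  have hdet : (lam • (1 : Matrix (Fin d) (Fin d) ℝ) + S).det = ∏ i, (lam + σ i) := by
    have h := eval_charpoly S (-lam)
    rw [hS.1.charpoly_eq, Polynomial.eval_prod] at h
    have e : lam • (1 : Matrix (Fin d) (Fin d) ℝ) + S = -(scalar (Fin d) (-lam) - S) := by
      rw [scalar_apply, ← smul_one_eq_diagonal]
      simp [add_comm]
    rw [e, det_neg, ← h, ← Finset.card_univ, ← Finset.prod_const, ← Finset.prod_mul_distrib]
    exact Finset.prod_congr rfl fun i _ => by simp [hσ]; ring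
  have hpos : ∀ i, 0 < lam + σ i := fun i => add_pos_of_pos_of_nonneg hlam (hσ0 i)
  have hlog : Real.log (lam • (1 : Matrix (Fin d) (Fin d) ℝ) + S).det - d * Real.log lam =
      ∑ i, Real.log (1 + σ i / lam) := by
    rw [hdet, Real.log_prod fun i _ => (hpos i).ne']
    have : (d : ℝ) * Real.log lam = ∑ _i : Fin d, Real.log lam := by simp
    rw [this, ← Finset.sum_sub_distrib]
    refine Finset.sum_congr rfl fun i _ => ?_
    rw [← Real.log_div (hpos i).ne' hlam.ne', add_div, div_self hlam.ne']
  rw [hlog]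
  have hL : 0 ≤ Real.log (1 + T / lam) := Real.log_nonneg (by
    have := div_nonneg hT0 hlam.le
    linarith)
  calc ∑ i, Real.log (1 + σ i / lam)
      ≤ ∑ i, if σ i ≠ 0 then Real.log (1 + T / lam) else 0 := by
        refine Finset.sum_le_sum fun i _ => ?_
        split_ifs with h
        · have := div_nonneg (hσ0 i) hlam.le
          apply Real.log_le_log (by linarith)
          have := hσT i
          gcongr
        · simp [not_not.mp h]
    _ = S.rank * Real.log (1 + T / lam) := by
        rw [← Finset.sum_filter, Finset.sum_const, nsmul_eq_mul,
          hS.1.rank_eq_card_non_zero_eigs, Fintype.card_subtype]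
    _ ≤ r * Real.log (1 + T / lam) := by gcongr

lemma rank_sum_vecMulVec :
    (∑ t, vecMulVec (x t) (x t)).rank = Module.finrank ℝ (Submodule.span ℝ (Set.range x)) := by
  have : ∑ t, vecMulVec (x t) (x t) = (Matrix.of x)ᵀ * Matrix.of x := by
    ext i j
    simp [Matrix.sum_apply, vecMulVec_apply, Matrix.mul_apply]
  rw [this, rank_transpose_mul_self, rank_eq_finrank_span_row]
  rfl

lemma trace_sum_vecMulVec_le (hx : ∀ k, ∑ i, (x k i) ^ 2 ≤ 1) :
    (∑ t, vecMulVec (x t) (x t)).trace ≤ K := by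
  rw [trace_sum]
  calc ∑ t, (vecMulVec (x t) (x t)).trace ≤ ∑ _t : Fin K, (1 : ℝ) :=
        Finset.sum_le_sum fun t _ => by
          simpa [trace, vecMulVec_apply, sq] using hx t
    _ = K := by simp

end EllipticalPotential

open EllipticalPotential in
open Matrix in
/-- Elliptical potential lemma, square-root form. -/
theorem elliptical_potential_sqrt {d K r : ℕ} (x : Fin K → Fin d → ℝ)
    (hx : ∀ k, ∑ i, (x k i) ^ 2 ≤ 1)
    (hr : Module.finrank ℝ (Submodule.span ℝ (Set.range x)) ≤ r)
    (lam B : ℝ) (hlam : 0 < lam) (hB : 0 < B)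
    (U : Fin K → Matrix (Fin d) (Fin d) ℝ)
    (hU : ∀ k, U k = lam • (1 : Matrix (Fin d) (Fin d) ℝ) +
      ∑ t ∈ Finset.univ.filter (fun t => t < k), vecMulVec (x t) (x t)) :
    ∑ k, min (Real.sqrt (x k ⬝ᵥ ((U k)⁻¹ *ᵥ x k))) (Real.sqrt B) ≤
      Real.sqrt ((1 + B) * r * K * Real.log (1 + K / lam)) := by
  have hUg : ∀ k : Fin K, U k = regGram x lam k := fun k => by
    rw [hU, regGram]
    simp only [Fin.lt_def]
  have hq : ∀ k, 0 ≤ x k ⬝ᵥ ((U k)⁻¹ *ᵥ x k) := fun k => by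
    rw [hUg]
    exact quad_nonneg x hlam k (x k)
  have hpot : ∑ k, Real.log (1 + x k ⬝ᵥ ((U k)⁻¹ *ᵥ x k)) ≤ r * Real.log (1 + K / lam) := by
    simp only [hUg]
    rw [sum_log_eq x hlam]
    have hK : regGram x lam K = lam • (1 : Matrix (Fin d) (Fin d) ℝ) +
        ∑ t, vecMulVec (x t) (x t) := by simp [regGram]
    rw [hK]
    exact log_det_le (posSemidef_sum_vecMulVec x _) ((rank_sum_vecMulVec x).trans_le hr)
      (trace_sum_vecMulVec_le x hx) hlam
  have hsq : ∀ k, min (Real.sqrt (x k ⬝ᵥ ((U k)⁻¹ *ᵥ x k))) (Real.sqrt B) ^ 2 ≤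
      (1 + B) * Real.log (1 + x k ⬝ᵥ ((U k)⁻¹ *ᵥ x k)) := fun k => by
    rw [← Real.sqrt_monotone.map_min, Real.sq_sqrt (le_min (hq k) hB.le)]
    exact min_le_mul_log (hq k) hB
  apply Real.le_sqrt_of_sq_le
  calc (∑ k, min (Real.sqrt (x k ⬝ᵥ ((U k)⁻¹ *ᵥ x k))) (Real.sqrt B)) ^ 2
      ≤ K * ∑ k, min (Real.sqrt (x k ⬝ᵥ ((U k)⁻¹ *ᵥ x k))) (Real.sqrt B) ^ 2 := by
        simpa using sq_sum_le_card_mul_sum_sq (s := Finset.univ)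
          (f := fun k => min (Real.sqrt (x k ⬝ᵥ ((U k)⁻¹ *ᵥ x k))) (Real.sqrt B))
    _ ≤ K * ∑ k, (1 + B) * Real.log (1 + x k ⬝ᵥ ((U k)⁻¹ *ᵥ x k)) := by
        gcongr with k
        exact hsq k
    _ = K * ((1 + B) * ∑ k, Real.log (1 + x k ⬝ᵥ ((U k)⁻¹ *ᵥ x k))) := by
        rw [← Finset.mul_sum]
    _ ≤ K * ((1 + B) * (r * Real.log (1 + K / lam))) := by gcongr
    _ = (1 + B) * r * K * Real.log (1 + K / lam) := by ring
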